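/- Take s to be the identity function, so that s0=ε, s½=ε+τ/2, s1=ε+τ, and let κ=ε/τ. There exists a function N̂:(0,∞)→ℕ such that for all real ε,τ>0 with ε+τ≤1 and every integer N≥2, the Jacobian determinants of both mesh maps Π_A and Π_B are strictly positive at every point of the closed reference triangle T̂ if and only if N ≥ N̂(κ); moreover there exist constants 0<c≤C such that c(1+κ^{1/4}) ≤ N̂(κ) ≤ C(1+κ^{1/4}) for all κ>0. -/

import Mathlib

/-!
In the coordinates `y = x₁ + x₂`, `z = x₁ - x₂`, with `κ = ε / τ` and
`d = 1 - cos (π / (2N)) ∈ (0, 1/3]`, both Jacobian determinants are the positive factor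
`4 σ τ²` times a polynomial (`FA`, `FB`) in `y` and `w = z²`, affine in `w` and quadratic in `y`,
to be examined on `0 ≤ w ≤ y²`, `0 ≤ y ≤ 1`.

* For type B the coefficient of `w` is positive, so `w = 0` is the worst case; there `FB` is a
  product of two affine functions of `y`, and it is positive iff it is so at `y = 1`, which reads
  `2 d + 2 κ d² < 1`.
* For type A, if the coefficient of `w` is nonnegative then again `w = 0` is the worst case, and
  the type-B inequality suffices. If it is negative, the worst case is `w = y²`; along that curve
  the polynomial is concave in `y`, so only `y = 0` (harmless) and `y = 1` matter. The latter reads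
  `(κ + 1) d² (14 - 6 d) < 1 + 5 d - 2 d²`.

The two inequalities (`Good`) persist when `d` decreases, hence when `N` increases, so the least
admissible `N ≥ 2` is the threshold. Since `d` is comparable with `N⁻²` and `Good` compares
`(κ + 1) d²` with a constant, the threshold is comparable with `1 + κ^(1/4)`.
-/

open Real Set

/-- The closed reference triangle `T̂`. -/
def Tref : Set (ℝ × ℝ) := {x | 0 ≤ x.1 ∧ 0 ≤ x.2 ∧ x.1 + x.2 ≤ 1}

/-- The Jacobian determinant of a map `ℝ² → ℝ²` at a point: the determinant of
its total (Fréchet) derivative there. -/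
noncomputable def jacDet (f : ℝ × ℝ → ℝ × ℝ) (x : ℝ × ℝ) : ℝ :=
  LinearMap.det ((fderiv ℝ f x).toLinearMap)

/-- The type-A iso-parametric interpolation map `Π_A`. -/
noncomputable def PiA (s0 sh s1 c σ : ℝ) (x : ℝ × ℝ) : ℝ × ℝ :=
  (s0 + (-3 * s0 - s1 * (2 * c ^ 2 - 1) + 4 * sh * c) * (x.1 + x.2)
      + 2 * (s0 + s1 - 2 * sh * c) * (x.1 + x.2) ^ 2
      - 4 * s1 * σ ^ 2 * (x.1 ^ 2 + x.2 ^ 2),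
    (2 * (2 * σ * (s1 * c - sh)) * (x.1 + x.2) - 2 * σ * (s1 * c - 2 * sh))
      * (x.2 - x.1))

/-- The type-B iso-parametric interpolation map `Π_B`. -/
noncomputable def PiB (s0 sh s1 c σ : ℝ) (x : ℝ × ℝ) : ℝ × ℝ :=
  (s1 + (-3 * s1 - s0 * (2 * c ^ 2 - 1) + 4 * sh * c) * (x.1 + x.2)
      + 2 * (s0 + s1 - 2 * sh * c) * (x.1 + x.2) ^ 2
      - 4 * s0 * σ ^ 2 * (x.1 ^ 2 + x.2 ^ 2),
    (2 * (2 * σ * (s0 * c - sh)) * (x.1 + x.2) - 2 * σ * (s0 * c - 2 * sh))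
      * (x.1 - x.2))

/-- Criterion for positivity of both Jacobian determinants, where `d = 1 - cos (π / (2N))`. -/
def Good (κ d : ℝ) : Prop :=
  2 * d + 2 * κ * d ^ 2 < 1 ∧ (κ + 1) * d ^ 2 * (14 - 6 * d) < 1 + 5 * d - 2 * d ^ 2

/-- The type-A Jacobian determinant divided by `4 σ τ²`, as a function of `y = x₁ + x₂` and
`w = (x₁ - x₂)²`. -/
noncomputable def FA (κ d y w : ℝ) : ℝ :=
  (1 + 2 * d * (1 - d - κ * d) * (1 - 2 * y)) * (2 * (1 / 2 - d - κ * d) * y + κ * (1 + d) + d)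
    + 8 * (κ + 1) * (d * (2 - d)) * (1 / 2 - d - κ * d) * w

/-- The type-B Jacobian determinant divided by `4 σ τ²`, as a function of `y = x₁ + x₂` and
`w = (x₁ - x₂)²`. -/
noncomputable def FB (κ d y w : ℝ) : ℝ :=
  (1 + 2 * d * (1 + κ * d) * (1 - 2 * y)) * (κ * (1 + d) + 1 - (2 * κ * d + 1) * y)
    + 8 * κ * (d * (2 - d)) * (κ * d + 1 / 2) * w

/-! ### The Jacobian determinants -/

/-- Jacobian determinant of a map of the shape shared by `PiA` and `PiB`. -/
lemma jacDet_general (p0 p1 p2 p3 q1 q2 : ℝ) (x : ℝ × ℝ) :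
    jacDet (fun x : ℝ × ℝ =>
      (p0 + p1 * (x.1 + x.2) + p2 * (x.1 + x.2) ^ 2 - p3 * (x.1 ^ 2 + x.2 ^ 2),
        (q1 * (x.1 + x.2) - q2) * (x.2 - x.1))) x =
    (p1 + 2 * p2 * (x.1 + x.2) - 2 * p3 * x.1)
        * (q1 * (x.2 - x.1) + (q1 * (x.1 + x.2) - q2))
      - (p1 + 2 * p2 * (x.1 + x.2) - 2 * p3 * x.2)
        * (q1 * (x.2 - x.1) - (q1 * (x.1 + x.2) - q2)) := by
  have h1 : HasFDerivAt (fun x : ℝ × ℝ => x.1) (ContinuousLinearMap.fst ℝ ℝ ℝ) x := hasFDerivAt_fst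
  have h2 : HasFDerivAt (fun x : ℝ × ℝ => x.2) (ContinuousLinearMap.snd ℝ ℝ ℝ) x := hasFDerivAt_snd
  have hs := h1.add h2
  have hu := (((hs.const_mul p1).const_add p0).add ((hs.pow 2).const_mul p2)).sub
    (((h1.pow 2).add (h2.pow 2)).const_mul p3)
  have hv := ((hs.const_mul q1).sub_const q2).mul (h2.sub h1)
  have h := (hu.prodMk hv).fderiv
  unfold jacDet
  erw [h]
  rw [← LinearMap.det_toMatrix (Module.Basis.finTwoProd ℝ), Matrix.det_fin_two]
  simp [LinearMap.toMatrix_apply]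
  ring

lemma jacDet_PiA (κ τ c σ : ℝ) (h : σ ^ 2 + c ^ 2 = 1) (x : ℝ × ℝ) :
    jacDet (PiA (κ * τ) (κ * τ + τ / 2) (κ * τ + τ) c σ) x =
      4 * σ * τ ^ 2 * FA κ (1 - c) (x.1 + x.2) ((x.1 - x.2) ^ 2) := by
  unfold PiA
  rw [jacDet_general, FA]
  linear_combination (-16 * (κ + 1) * τ ^ 2 * σ * (x.1 + x.2) * (2 * (1 / 2 - (1 - c) - κ * (1 - c))
    * (x.1 + x.2) + κ * (1 + (1 - c)) + (1 - c)) + 32 * (κ + 1) * τ ^ 2 * σ *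
    (1 / 2 - (1 - c) - κ * (1 - c)) * (x.1 - x.2) ^ 2) * h

lemma jacDet_PiB (κ τ c σ : ℝ) (h : σ ^ 2 + c ^ 2 = 1) (x : ℝ × ℝ) :
    jacDet (PiB (κ * τ) (κ * τ + τ / 2) (κ * τ + τ) c σ) x =
      4 * σ * τ ^ 2 * FB κ (1 - c) (x.1 + x.2) ((x.1 - x.2) ^ 2) := by
  have e : PiB (κ * τ) (κ * τ + τ / 2) (κ * τ + τ) c σ = fun x : ℝ × ℝ =>
      ((κ * τ + τ) + (-3 * (κ * τ + τ) - κ * τ * (2 * c ^ 2 - 1) + 4 * (κ * τ + τ / 2) * c)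
        * (x.1 + x.2)
      + 2 * (κ * τ + (κ * τ + τ) - 2 * (κ * τ + τ / 2) * c) * (x.1 + x.2) ^ 2
      - 4 * (κ * τ) * σ ^ 2 * (x.1 ^ 2 + x.2 ^ 2),
      (-(2 * (2 * σ * (κ * τ * c - (κ * τ + τ / 2)))) * (x.1 + x.2)
        - (-(2 * σ * (κ * τ * c - 2 * (κ * τ + τ / 2))))) * (x.2 - x.1)) := by
    funext x
    simp only [PiB, Prod.mk.injEq, true_and]
    ring
  rw [e, jacDet_general, FB]
  linear_combination (16 * κ * τ ^ 2 * σ * (x.1 + x.2) * (κ * (1 + (1 - c)) + 1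
    - (2 * κ * (1 - c) + 1) * (x.1 + x.2)) + 32 * κ * τ ^ 2 * σ *
    (κ * (1 - c) + 1 / 2) * (x.1 - x.2) ^ 2) * h

/-! ### The positivity criterion -/

/-- An affine function of `y`, written as `1 + a (1 - 2 y)`, is positive on `[0, 1]` if `|a| < 1`. -/
lemma affine_pos {a y : ℝ} (h1 : -1 < a) (h2 : a < 1) (hy0 : 0 ≤ y) (hy1 : y ≤ 1) :
    0 < 1 + a * (1 - 2 * y) := by
  nlinarith [mul_nonneg hy0 (sub_nonneg.2 h2.le),
    mul_nonneg (sub_nonneg.2 hy1) (by linarith : 0 ≤ 1 + a)]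

lemma FB_pos {κ d y w : ℝ} (hκ : 0 < κ) (hd : 0 < d) (hd3 : d ≤ 1 / 3) (hG : Good κ d)
    (hy0 : 0 ≤ y) (hy1 : y ≤ 1) (hw : 0 ≤ w) : 0 < FB κ d y w := by
  have hκd : 0 < κ * d := mul_pos hκ hd
  have h1 : 0 < 1 + 2 * d * (1 + κ * d) * (1 - 2 * y) :=
    affine_pos (by nlinarith [mul_pos hd hκd]) (by nlinarith [hG.1]) hy0 hy1
  have h2 : 0 < κ * (1 + d) + 1 - (2 * κ * d + 1) * y := by
    nlinarith [mul_nonneg (sub_nonneg.2 hy1) (by nlinarith : 0 ≤ 2 * κ * d + 1)]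
  have h3 : 0 ≤ 8 * κ * (d * (2 - d)) * (κ * d + 1 / 2) * w := by
    have : 0 ≤ 2 - d := by linarith
    positivity
  unfold FB
  have := mul_pos h1 h2
  linarith

lemma FA_pos {κ d y w : ℝ} (hκ : 0 < κ) (hd : 0 < d) (hd3 : d ≤ 1 / 3) (hG : Good κ d)
    (hy0 : 0 ≤ y) (hy1 : y ≤ 1) (hw : 0 ≤ w) (hwy : w ≤ y ^ 2) : 0 < FA κ d y w := by
  have hκd : 0 < κ * d := mul_pos hκ hd
  have ha1 : -1 < 2 * d * (1 - d - κ * d) := by nlinarith [hG.1]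
  have ha2 : 2 * d * (1 - d - κ * d) < 1 := by nlinarith [mul_pos hd hκd]
  have h2d : 0 < 2 - d := by linarith
  have hK : 0 < 8 * (κ + 1) * (d * (2 - d)) := by positivity
  rcases le_or_gt 0 (1 / 2 - d - κ * d) with hh | hh
  · have h1 := affine_pos ha1 ha2 hy0 hy1
    have h2 : 0 < 2 * (1 / 2 - d - κ * d) * y + κ * (1 + d) + d := by positivity
    have h3 := mul_nonneg (mul_nonneg hK.le hh) hw
    unfold FA
    have := mul_pos h1 h2
    linarith
  · have h0 : 0 < FA κ d 0 0 := by
      have := affine_pos ha1 ha2 le_rfl zero_le_one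
      have h2 : 0 < 2 * (1 / 2 - d - κ * d) * 0 + κ * (1 + d) + d := by
        have : 0 < κ * (1 + d) + d := by positivity
        linarith
      unfold FA
      have := mul_pos this h2
      linarith
    have h1 : 0 < FA κ d 1 1 := by
      have e : FA κ d 1 1 =
          (κ + 1) * (1 + 5 * d - 2 * d ^ 2 - (κ + 1) * d ^ 2 * (14 - 6 * d)) := by
        unfold FA; ring
      rw [e]
      exact mul_pos (by linarith) (by linarith [hG.2])
    -- concavity of the restriction to `w = y²`
    have e : FA κ d y (y ^ 2) = (1 - y) * FA κ d 0 0 + y * FA κ d 1 1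
        + y * (1 - y) * (8 * (-(1 / 2 - d - κ * d)) * d * (2 * κ + 1)) := by
      unfold FA; ring
    have h3 : FA κ d y (y ^ 2) ≤ FA κ d y w := by
      have := mul_nonneg (mul_nonneg hK.le (neg_nonneg.2 hh.le)) (sub_nonneg.2 hwy)
      unfold FA
      linarith
    have h4 : 0 ≤ y * (1 - y) * (8 * (-(1 / 2 - d - κ * d)) * d * (2 * κ + 1)) := by
      have := sub_nonneg.2 hy1
      have := neg_nonneg.2 hh.le
      positivity
    have h5 : 0 < (1 - y) * FA κ d 0 0 + y * FA κ d 1 1 := by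
      rcases hy0.eq_or_lt with rfl | hy
      · linarith
      · have := mul_pos hy h1
        have := mul_nonneg (sub_nonneg.2 hy1) h0.le
        linarith
    linarith

/-- `Good` is necessary: evaluate `FA` at the vertex `(1, 0)` and `FB` at `(1/2, 1/2)`. -/
lemma good_of_pos {κ d : ℝ} (hκ : 0 < κ) (hd3 : d ≤ 1 / 3) (hA : 0 < FA κ d 1 1)
    (hB : 0 < FB κ d 1 0) : Good κ d := by
  have eA : FA κ d 1 1 =
      (κ + 1) * (1 + 5 * d - 2 * d ^ 2 - (κ + 1) * d ^ 2 * (14 - 6 * d)) := by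
    unfold FA; ring
  have eB : FB κ d 1 0 = (κ * (1 - d)) * (1 - (2 * d + 2 * κ * d ^ 2)) := by
    unfold FB; ring
  rw [eA] at hA
  rw [eB] at hB
  have h1 := pos_of_mul_pos_right hA (by linarith)
  have h2 := pos_of_mul_pos_right hB (mul_nonneg hκ.le (by linarith))
  exact ⟨by linarith, by linarith⟩

lemma jac_pos_iff {κ τ c σ : ℝ} (hκ : 0 < κ) (hτ : 0 < τ) (hσ : 0 < σ) (h : σ ^ 2 + c ^ 2 = 1)
    (hd : 0 < 1 - c) (hd3 : 1 - c ≤ 1 / 3) :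
    (∀ x ∈ Tref, 0 < jacDet (PiA (κ * τ) (κ * τ + τ / 2) (κ * τ + τ) c σ) x ∧
      0 < jacDet (PiB (κ * τ) (κ * τ + τ / 2) (κ * τ + τ) c σ) x) ↔ Good κ (1 - c) := by
  have hp : 0 < 4 * σ * τ ^ 2 := by positivity
  simp only [jacDet_PiA _ _ _ _ h, jacDet_PiB _ _ _ _ h, mul_pos_iff_of_pos_left hp]
  constructor
  · intro H
    have hA := (H (1, 0) (by norm_num [Tref])).1
    have hB := (H (1 / 2, 1 / 2) (by norm_num [Tref])).2
    norm_num at hA hB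
    exact good_of_pos hκ hd3 hA hB
  · rintro hG x ⟨h1, h2, h3⟩
    exact ⟨FA_pos hκ hd hd3 hG (by linarith) h3 (sq_nonneg _)
      (by nlinarith [mul_nonneg h1 h2]), FB_pos hκ hd hd3 hG (by linarith) h3 (sq_nonneg _)⟩

/-! ### Monotonicity and size of the threshold -/

lemma Good.mul_sq_lt {κ d : ℝ} (hκ : 0 < κ) (hd3 : d ≤ 1 / 3) (hG : Good κ d) :
    (κ + 1) * d ^ 2 < 1 / 4 := by
  have h := hG.2
  have h0 : 0 ≤ (κ + 1) * d ^ 2 := by positivity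
  nlinarith [mul_nonneg h0 (by linarith : 0 ≤ 14 - 6 * d - 12), sq_nonneg d]

lemma Good.anti {κ d e : ℝ} (hκ : 0 < κ) (he : 0 < e) (hed : e ≤ d) (hd3 : d ≤ 1 / 3)
    (hG : Good κ d) : Good κ e := by
  have hd : 0 < d := he.trans_le hed
  have hq := hG.mul_sq_lt hκ hd3
  refine ⟨?_, ?_⟩
  · have : e ^ 2 ≤ d ^ 2 := by gcongr
    nlinarith [hG.1, mul_le_mul_of_nonneg_left this hκ.le]
  · -- Multiply by `d²` and compare with `e²` times the inequality at `d`.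
    have h1 : 0 ≤ (d - e) * (d + e + 5 * d * e - 6 * ((κ + 1) * d ^ 2) * e ^ 2) := by
      apply mul_nonneg (by linarith)
      have : (κ + 1) * d ^ 2 * e ^ 2 ≤ 1 / 4 * e ^ 2 := by gcongr
      nlinarith [mul_pos hd he]
    have h2 : 0 < e ^ 2 * (1 + 5 * d - 2 * d ^ 2 - (κ + 1) * d ^ 2 * (14 - 6 * d)) :=
      mul_pos (by positivity) (by linarith [hG.2])
    have h3 : 0 < d ^ 2 * (1 + 5 * e - 2 * e ^ 2 - (κ + 1) * e ^ 2 * (14 - 6 * e)) := by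
      linarith
    have := pos_of_mul_pos_right h3 (by positivity)
    linarith

/-- The quantity `d = 1 - cos (π / (2N))`. -/
noncomputable def dN (N : ℕ) : ℝ := 1 - Real.cos (Real.pi / (2 * (N : ℝ)))

lemma dN_le {N : ℕ} (hN : 2 ≤ N) : dN N ≤ 5 / 4 / (N : ℝ) ^ 2 := by
  have hN0 : (0 : ℝ) < N := by exact_mod_cast (by omega : 0 < N)
  have h := Real.one_sub_sq_div_two_le_cos (x := Real.pi / (2 * (N : ℝ)))
  have hpi : Real.pi ^ 2 ≤ 10 := by nlinarith [Real.pi_lt_d2, Real.pi_pos]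
  have e : (Real.pi / (2 * (N : ℝ))) ^ 2 / 2 = Real.pi ^ 2 / 8 / (N : ℝ) ^ 2 := by
    field_simp; norm_num
  have : Real.pi ^ 2 / 8 / (N : ℝ) ^ 2 ≤ 5 / 4 / (N : ℝ) ^ 2 := by
    gcongr ?_ / _
    linarith
  unfold dN
  linarith

lemma le_dN {N : ℕ} (hN : 2 ≤ N) : 1 / 2 / (N : ℝ) ^ 2 ≤ dN N := by
  have hN0 : (0 : ℝ) < N := by exact_mod_cast (by omega : 0 < N)
  have hN1 : (1 : ℝ) ≤ N := by exact_mod_cast (by omega : 1 ≤ N)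
  have hle : |Real.pi / (2 * (N : ℝ))| ≤ Real.pi := by
    rw [abs_of_pos (by positivity)]
    apply div_le_self Real.pi_pos.le; linarith
  have h := Real.cos_le_one_sub_mul_cos_sq hle
  have e : 2 / Real.pi ^ 2 * (Real.pi / (2 * (N : ℝ))) ^ 2 = 1 / 2 / (N : ℝ) ^ 2 := by
    field_simp
  unfold dN
  linarith

lemma dN_pos {N : ℕ} (hN : 2 ≤ N) : 0 < dN N := by
  have hN0 : (0 : ℝ) < N := by exact_mod_cast (by omega : 0 < N)
  exact lt_of_lt_of_le (by positivity) (le_dN hN)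

lemma dN_le_third {N : ℕ} (hN : 2 ≤ N) : dN N ≤ 1 / 3 := by
  have hN2 : (2 : ℝ) ≤ N := by exact_mod_cast hN
  refine (dN_le hN).trans ?_
  rw [div_le_iff₀ (by positivity)]
  nlinarith

lemma dN_anti {M N : ℕ} (hM : 2 ≤ M) (hMN : M ≤ N) : dN N ≤ dN M := by
  have hM0 : (2 : ℝ) ≤ M := by exact_mod_cast hM
  have hMN' : (M : ℝ) ≤ N := by exact_mod_cast hMN
  unfold dN
  have : Real.cos (Real.pi / (2 * (M : ℝ))) ≤ Real.cos (Real.pi / (2 * (N : ℝ))) := by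
    apply Real.cos_le_cos_of_nonneg_of_le_pi (by positivity)
    · apply div_le_self Real.pi_pos.le; linarith
    · gcongr
  linarith

/-- `N ≥ 4 (1 + κ^(1/4))` is admissible. -/
lemma good_of_large {κ t : ℝ} (hκ : 0 < κ) (ht : 0 < t) (htκ : t ^ 4 = κ) {N : ℕ}
    (hN : 4 * (1 + t) ≤ N) : Good κ (dN N) := by
  have hN4 : (4 : ℝ) ≤ N := by linarith
  have hN2 : 2 ≤ N := by
    have : 4 ≤ N := by exact_mod_cast hN4
    omega
  have hN0 : (0 : ℝ) < N := by linarith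
  have hd0 := dN_pos hN2
  have hd := dN_le hN2
  have hd8 : dN N ≤ 1 / 8 := by
    refine hd.trans ?_
    rw [div_le_iff₀ (by positivity)]
    nlinarith
  have hκ4 : (κ + 1) * 256 ≤ (N : ℝ) ^ 4 := by
    have h1 : (4 * (1 + t)) ^ 4 ≤ (N : ℝ) ^ 4 := by gcongr
    have h2 : t ^ 4 + 1 ≤ (1 + t) ^ 4 := by
      have : (1 + t) ^ 4 = t ^ 4 + 1 + (4 * t + 6 * t ^ 2 + 4 * t ^ 3) := by ring
      have : 0 < 4 * t + 6 * t ^ 2 + 4 * t ^ 3 := by positivity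
      linarith
    rw [mul_pow] at h1
    linarith
  have hq : (κ + 1) * dN N ^ 2 ≤ 1 / 16 := by
    have h1 : dN N ^ 2 ≤ (5 / 4 / (N : ℝ) ^ 2) ^ 2 := by gcongr
    have h2 : (κ + 1) * (5 / 4 / (N : ℝ) ^ 2) ^ 2 ≤ 1 / 16 := by
      have : (κ + 1) * (5 / 4 / (N : ℝ) ^ 2) ^ 2 = (κ + 1) * (25 / 16) / (N : ℝ) ^ 4 := by
        field_simp; norm_num
      rw [this, div_le_iff₀ (by positivity)]
      linarith
    have := mul_le_mul_of_nonneg_left h1 (by linarith : 0 ≤ κ + 1)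
    linarith
  have hq0 : 0 ≤ (κ + 1) * dN N ^ 2 := by positivity
  constructor
  · nlinarith [sq_nonneg (dN N)]
  · nlinarith [mul_nonneg hq0 hd0.le]

/-- An admissible `N` satisfies `κ < N⁴`. -/
lemma lt_of_good {κ : ℝ} (hκ : 0 < κ) {N : ℕ} (hN : 2 ≤ N) (hG : Good κ (dN N)) :
    κ < (N : ℝ) ^ 4 := by
  have hN0 : (0 : ℝ) < N := by exact_mod_cast (by omega : 0 < N)
  have hq := hG.mul_sq_lt hκ (dN_le_third hN)
  have h1 : (1 / 2 / (N : ℝ) ^ 2) ^ 2 ≤ dN N ^ 2 := by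
    gcongr
    exact le_dN hN
  have h2 := mul_le_mul_of_nonneg_left h1 (by linarith : 0 ≤ κ + 1)
  have h3 : (κ + 1) * (1 / 2 / (N : ℝ) ^ 2) ^ 2 = (κ + 1) / 4 / (N : ℝ) ^ 4 := by
    field_simp; norm_num
  have h4 : (κ + 1) / 4 / (N : ℝ) ^ 4 < 1 / 4 := by linarith
  rw [div_lt_iff₀ (by positivity)] at h4
  linarith

/-- The threshold: the least admissible `N ≥ 2`. -/
noncomputable def threshold (κ : ℝ) : ℕ := sInf {N : ℕ | 2 ≤ N ∧ Good κ (dN N)}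

lemma rpow_quarter_pow {κ : ℝ} (hκ : 0 < κ) : (κ ^ ((1 : ℝ) / 4)) ^ 4 = κ := by
  rw [← Real.rpow_natCast, ← Real.rpow_mul hκ.le]
  norm_num

lemma large_mem {κ : ℝ} (hκ : 0 < κ) :
    ⌈4 * (1 + κ ^ ((1 : ℝ) / 4))⌉₊ ∈ {N : ℕ | 2 ≤ N ∧ Good κ (dN N)} := by
  have ht : 0 < κ ^ ((1 : ℝ) / 4) := by positivity
  have h := Nat.le_ceil (4 * (1 + κ ^ ((1 : ℝ) / 4)))
  refine ⟨?_, good_of_large hκ ht (rpow_quarter_pow hκ) h⟩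
  have : (2 : ℝ) ≤ (⌈4 * (1 + κ ^ ((1 : ℝ) / 4))⌉₊ : ℝ) := by linarith
  exact_mod_cast this

lemma threshold_mem {κ : ℝ} (hκ : 0 < κ) : 2 ≤ threshold κ ∧ Good κ (dN (threshold κ)) :=
  Nat.sInf_mem ⟨_, large_mem hκ⟩

theorem stmt10 :
    ∃ Nhat : ℝ → ℕ,
      (∀ ε τ : ℝ, 0 < ε → 0 < τ → ε + τ ≤ 1 → ∀ N : ℕ, 2 ≤ N →
        ((∀ x ∈ Tref,
            0 < jacDet (PiA ε (ε + τ / 2) (ε + τ)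
                  (Real.cos (Real.pi / (2 * (N : ℝ))))
                  (Real.sin (Real.pi / (2 * (N : ℝ))))) x ∧
            0 < jacDet (PiB ε (ε + τ / 2) (ε + τ)
                  (Real.cos (Real.pi / (2 * (N : ℝ))))
                  (Real.sin (Real.pi / (2 * (N : ℝ))))) x) ↔
          Nhat (ε / τ) ≤ N)) ∧
      ∃ c C : ℝ, 0 < c ∧ c ≤ C ∧
        ∀ κ : ℝ, 0 < κ →
          c * (1 + κ ^ ((1 : ℝ) / 4)) ≤ (Nhat κ : ℝ) ∧
          (Nhat κ : ℝ) ≤ C * (1 + κ ^ ((1 : ℝ) / 4)) := by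
  refine ⟨threshold, ?_, 1 / 2, 5, by norm_num, by norm_num, ?_⟩
  · intro ε τ hε hτ _ N hN
    obtain ⟨κ, rfl⟩ : ∃ κ, ε = κ * τ := ⟨ε / τ, by field_simp⟩
    have hκ : 0 < κ := pos_of_mul_pos_left hε hτ.le
    rw [mul_div_cancel_right₀ κ hτ.ne']
    have hN2 : (2 : ℝ) ≤ N := by exact_mod_cast hN
    have hσ : 0 < Real.sin (Real.pi / (2 * (N : ℝ))) := by
      apply Real.sin_pos_of_pos_of_lt_pi (by positivity)
      apply div_lt_self Real.pi_pos; linarith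
    rw [jac_pos_iff hκ hτ hσ (Real.sin_sq_add_cos_sq _) (dN_pos hN) (dN_le_third hN)]
    constructor
    · intro h
      exact Nat.sInf_le ⟨hN, h⟩
    · intro h
      obtain ⟨h2, hG⟩ := threshold_mem hκ
      exact hG.anti hκ (dN_pos hN) (dN_anti h2 h) (dN_le_third h2)
  · intro κ hκ
    obtain ⟨h2, hG⟩ := threshold_mem hκ
    have ht : 0 < κ ^ ((1 : ℝ) / 4) := by positivity
    have htκ := rpow_quarter_pow hκ
    have h2' : (2 : ℝ) ≤ threshold κ := by exact_mod_cast h2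
    constructor
    · have h := lt_of_good hκ h2 hG
      have : κ ^ ((1 : ℝ) / 4) < threshold κ :=
        lt_of_pow_lt_pow_left₀ 4 (by positivity) (htκ.trans_lt h)
      linarith
    · have hle : threshold κ ≤ ⌈4 * (1 + κ ^ ((1 : ℝ) / 4))⌉₊ :=
        Nat.sInf_le (large_mem hκ)
      have h1 : (threshold κ : ℝ) ≤ (⌈4 * (1 + κ ^ ((1 : ℝ) / 4))⌉₊ : ℝ) := by exact_mod_cast hle
      have h2 := Nat.ceil_lt_add_one (by positivity : 0 ≤ 4 * (1 + κ ^ ((1 : ℝ) / 4)))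
      linarith
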